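/- Let G be a finite group, H ≤ G a subgroup, and suppose the hidden shift s is drawn uniformly from H. Then the state (1/|H|) ∑_{h∈H} ((1/|G|) ∑_{g∈G} |φ_{h,g}⟩⟨φ_{h,g}|), with |φ_{s,g}⟩ := (|0,g⟩+|1,gs⟩)/√2, is unitarily equivalent to the tensor product of the averaged hidden shift state for the group H with the maximally mixed state of dimension |G|/|H| (i.e., it equals a direct sum over cosets of |G|/|H| copies of the H hidden shift state). -/

import Mathlib

theorem exists_coset_equiv {G : Type*} [Group G] (H : Subgroup G) :
    ∃ f : G ≃ (↥H × (G ⧸ H)), ∀ (g : G) (h : ↥H), f (g * h) = ((f g).1 * h, (f g).2) := by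
  have key : ∀ g : G, ((g : G ⧸ H).out)⁻¹ * g ∈ H := fun g => by
    rw [← QuotientGroup.eq]; exact Quotient.out_eq' _
  refine ⟨⟨fun g => (⟨((g : G ⧸ H).out)⁻¹ * g, key g⟩, (g : G ⧸ H)),
    fun p => p.2.out * p.1, fun g => by simp, ?_⟩, ?_⟩
  · rintro ⟨h, q⟩
    have hq : ((q.out * (h : G) : G) : G ⧸ H) = q := by
      rw [QuotientGroup.mk_mul_of_mem _ h.2]; exact Quotient.out_eq' _
    ext
    · simp only [hq]; simp
    · exact hq
  · intro g h
    have hq : ((g * (h : G) : G) : G ⧸ H) = (g : G ⧸ H) := QuotientGroup.mk_mul_of_mem _ h.2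
    ext
    · simp only [Equiv.coe_fn_mk, hq]; simp [mul_assoc]
    · exact hq

open Kronecker in
/-- If the hidden shift is drawn uniformly from a subgroup `H ≤ G`, the resulting averaged
state is unitarily equivalent to the tensor product of the averaged hidden shift state for
`H` with the maximally mixed state of dimension `|G|/|H|` (indexed by the cosets `G ⧸ H`). -/
theorem restricted_hidden_shift_state_tensor_decomposition
    {G : Type*} [Group G] [Fintype G] [DecidableEq G]
    (H : Subgroup G) [Fintype ↥H] [Fintype (G ⧸ H)] [DecidableEq (G ⧸ H)] :
    ∃ (e : (G ⊕ G) ≃ ((↥H ⊕ ↥H) × (G ⧸ H))) (U : Matrix (G ⊕ G) (G ⊕ G) ℂ),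
      U ∈ Matrix.unitaryGroup (G ⊕ G) ℂ ∧
      U *
          ((Fintype.card ↥H : ℂ)⁻¹ • ∑ h : ↥H,
            (Fintype.card G : ℂ)⁻¹ • ∑ g : G,
              Matrix.vecMulVec
                (fun v : G ⊕ G => match v with
                  | Sum.inl a => if a = g then ((Real.sqrt 2 : ℂ))⁻¹ else 0
                  | Sum.inr a => if a = g * (h : G) then ((Real.sqrt 2 : ℂ))⁻¹ else 0)
                (star fun v : G ⊕ G => match v with
                  | Sum.inl a => if a = g then ((Real.sqrt 2 : ℂ))⁻¹ else 0
                  | Sum.inr a => if a = g * (h : G) then ((Real.sqrt 2 : ℂ))⁻¹ else 0)) *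
          star U
        = Matrix.reindex e.symm e.symm
            ((((Fintype.card ↥H : ℂ) ^ 2)⁻¹ • ∑ h : ↥H, ∑ h' : ↥H,
              Matrix.vecMulVec
                (fun v : ↥H ⊕ ↥H => match v with
                  | Sum.inl a => if a = h' then ((Real.sqrt 2 : ℂ))⁻¹ else 0
                  | Sum.inr a => if a = h' * h then ((Real.sqrt 2 : ℂ))⁻¹ else 0)
                (star fun v : ↥H ⊕ ↥H => match v with
                  | Sum.inl a => if a = h' then ((Real.sqrt 2 : ℂ))⁻¹ else 0
                  | Sum.inr a => if a = h' * h then ((Real.sqrt 2 : ℂ))⁻¹ else 0)) ⊗ₖ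
             ((Fintype.card (G ⧸ H) : ℂ)⁻¹ • (1 : Matrix (G ⧸ H) (G ⧸ H) ℂ))) := by
  obtain ⟨f, hf⟩ := exists_coset_equiv H
  refine ⟨(Equiv.sumCongr f f).trans (Equiv.sumProdDistrib _ _ _).symm, 1, one_mem _, ?_⟩
  have hc : (Fintype.card G : ℂ) = Fintype.card ↥H * Fintype.card (G ⧸ H) := by
    rw [Fintype.card_congr f, Fintype.card_prod]; push_cast; rfl
  have h1 : ∀ a g : G, (a = g) ↔ ((f a).1 = (f g).1 ∧ (f a).2 = (f g).2) := fun a g => by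
    rw [← f.injective.eq_iff, Prod.ext_iff]
  have h2 : ∀ (a g : G) (h : ↥H),
      (a = g * h) ↔ ((f a).1 = (f g).1 * h ∧ (f a).2 = (f g).2) := fun a g h => by
    rw [h1, hf]
  have h3 : ∀ (F : ↥H → ℂ) (p q : G ⧸ H),
      ∑ g : G, F (f g).1 * ((if p = (f g).2 then 1 else 0) * (if q = (f g).2 then 1 else 0))
        = (∑ h : ↥H, F h) * (if p = q then 1 else 0) := fun F p q => by
    rw [f.sum_comp (fun x : ↥H × (G ⧸ H) =>
      F x.1 * ((if p = x.2 then 1 else 0) * (if q = x.2 then 1 else 0))),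
      Fintype.sum_prod_type, Finset.sum_mul]
    refine Finset.sum_congr rfl fun h _ => ?_
    simp [eq_comm]
  have h4 : ∀ (P Q : Prop) [Decidable P] [Decidable Q] (c : ℂ),
      (if P ∧ Q then c else 0) = (if P then c else 0) * (if Q then 1 else 0) := by
    intro P Q _ _ c
    by_cases P <;> by_cases Q <;> simp [*]
  have h5 : ∀ (Q : Prop) [Decidable Q],
      star (if Q then (1 : ℂ) else 0) = if Q then 1 else 0 := by
    intro Q _
    by_cases Q <;> simp [*]
  rw [one_mul, star_one, mul_one]
  have main : ∀ (u v : ↥H → ↥H → ℂ) (p q : G ⧸ H),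
      (Fintype.card ↥H : ℂ)⁻¹ * ∑ h : ↥H, (Fintype.card G : ℂ)⁻¹ * ∑ g : G,
        (u h (f g).1 * (if p = (f g).2 then 1 else 0)) *
          star (v h (f g).1 * (if q = (f g).2 then 1 else 0))
      = (((Fintype.card ↥H : ℂ) ^ 2)⁻¹ * ∑ h : ↥H, ∑ h' : ↥H, u h h' * star (v h h')) *
        ((Fintype.card (G ⧸ H) : ℂ)⁻¹ * (if p = q then 1 else 0)) := by
    intro u v p q
    have : ∀ h : ↥H, ∑ g : G,
        (u h (f g).1 * (if p = (f g).2 then 1 else 0)) *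
          star (v h (f g).1 * (if q = (f g).2 then 1 else 0))
        = (∑ h' : ↥H, u h h' * star (v h h')) * (if p = q then 1 else 0) := fun h => by
      rw [← h3]
      refine Finset.sum_congr rfl fun g _ => ?_
      rw [star_mul', h5]; ring
    simp only [this]
    rw [← Finset.mul_sum, ← Finset.sum_mul, hc, mul_inv, pow_two, mul_inv]
    ring
  ext i j
  rcases i with a | a <;> rcases j with b | b <;>
    simp only [Matrix.reindex_apply, Matrix.submatrix_apply, Matrix.kroneckerMap_apply,
      Matrix.smul_apply, Matrix.sum_apply, Matrix.vecMulVec_apply, smul_eq_mul, Matrix.one_apply,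
      Equiv.symm_symm, Equiv.trans_apply, Equiv.sumCongr_apply, Sum.map_inl, Sum.map_inr,
      Equiv.sumProdDistrib_symm_apply_left, Equiv.sumProdDistrib_symm_apply_right, Pi.star_apply]
  · simp only [h1 a, h1 b, h4]
    exact main (fun h h' => if (f a).1 = h' then _ else 0)
      (fun h h' => if (f b).1 = h' then _ else 0) _ _
  · simp only [h1 a, h2 b, h4]
    exact main (fun h h' => if (f a).1 = h' then _ else 0)
      (fun h h' => if (f b).1 = h' * h then _ else 0) _ _
  · simp only [h2 a, h1 b, h4]
    exact main (fun h h' => if (f a).1 = h' * h then _ else 0)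
      (fun h h' => if (f b).1 = h' then _ else 0) _ _
  · simp only [h2 a, h2 b, h4]
    exact main (fun h h' => if (f a).1 = h' * h then _ else 0)
      (fun h h' => if (f b).1 = h' * h then _ else 0) _ _
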